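/- arXiv:math/0411421 — 5 statements merged into one kernel-verified Lean document; each statement's English description precedes it below -/
import Mathlib

section
/- For j ≥ 0 let a_j denote the j-th derivative of the function λ ↦ √(λ/(2−λ)) (which is C^∞ on the interval (0,2)) evaluated at λ = 1. Then a_0 = 1, and for j ≥ 1 the sequence satisfies the recursion: a_j = (j−1)·a_{j−1} if j is even, and a_j = j·a_{j−1} if j is odd. -/
lemma aux_smooth (n : ℕ) (x : ℝ) (hx : x ∈ Set.Ioo (0:ℝ) 2) :
    HasDerivAt (iteratedDeriv n (fun l : ℝ => Real.sqrt (l / (2 - l))))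
      (iteratedDeriv (n+1) (fun l : ℝ => Real.sqrt (l / (2 - l))) x) x := by
  have h2 : (0:ℝ) < 2 - x := by linarith [hx.2]
  have h : ContDiffAt ℝ ((n + 1 : ℕ) : WithTop ℕ∞) (fun l : ℝ => Real.sqrt (l / (2 - l))) x := by
    apply ContDiffAt.sqrt
    · exact contDiffAt_id.div (contDiffAt_const.sub contDiffAt_id) h2.ne'
    · exact (div_pos hx.1 h2).ne'
  rw [iteratedDeriv_succ]
  apply DifferentiableAt.hasDerivAt
  rw [← contDiffWithinAt_univ] at h
  have := h.differentiableWithinAt_iteratedDerivWithin (m := n)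
    (by exact_mod_cast Nat.lt_succ_self n) (by simpa using uniqueDiffOn_univ)
  rwa [iteratedDerivWithin_univ, differentiableWithinAt_univ] at this

lemma aux_zero (x : ℝ) (hx : x ∈ Set.Ioo (0:ℝ) 2) :
    x * (2 - x) * iteratedDeriv 1 (fun l : ℝ => Real.sqrt (l / (2 - l))) x
      = iteratedDeriv 0 (fun l : ℝ => Real.sqrt (l / (2 - l))) x := by
  have h2 : (0:ℝ) < 2 - x := by linarith [hx.2]
  have h1 := hx.1
  have hp := div_pos h1 h2
  have hd : HasDerivAt (fun l : ℝ => l / (2 - l)) ((1 * (2 - x) - x * (-1)) / (2 - x)^2) x :=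
    (hasDerivAt_id x).div ((hasDerivAt_id x).const_sub 2) h2.ne'
  have hs := hd.sqrt hp.ne'
  rw [iteratedDeriv_one, hs.deriv, iteratedDeriv_zero]
  have hq : Real.sqrt (x / (2 - x)) ^ 2 = x / (2 - x) := Real.sq_sqrt hp.le
  have hq0 : Real.sqrt (x / (2 - x)) ≠ 0 := (Real.sqrt_pos.2 hp).ne'
  generalize Real.sqrt (x / (2 - x)) = q at *
  rw [eq_div_iff h2.ne'] at hq
  field_simp
  linarith

lemma aux_rec (n : ℕ) : ∀ x ∈ Set.Ioo (0:ℝ) 2,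
    x * (2 - x) * iteratedDeriv (n+2) (fun l : ℝ => Real.sqrt (l / (2 - l))) x
      + ((n:ℝ)+1) * (2 - 2 * x) * iteratedDeriv (n+1) (fun l : ℝ => Real.sqrt (l / (2 - l))) x
      - ((n:ℝ)+1) * n * iteratedDeriv n (fun l : ℝ => Real.sqrt (l / (2 - l))) x
      = iteratedDeriv (n+1) (fun l : ℝ => Real.sqrt (l / (2 - l))) x := by
  have hP : ∀ x : ℝ, HasDerivAt (fun l : ℝ => l * (2 - l)) (2 - 2 * x) x := fun x => by
    exact ((hasDerivAt_id x).mul ((hasDerivAt_id x).const_sub 2)).congr_deriv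
      (by simp only [id]; ring)
  have hQ : ∀ x : ℝ, HasDerivAt (fun l : ℝ => 2 - 2 * l) (-2) x := fun x => by
    exact (((hasDerivAt_id x).const_mul 2).const_sub 2).congr_deriv (by ring)
  have hF := aux_smooth
  have h0 := aux_zero
  generalize hf : (fun l : ℝ => Real.sqrt (l / (2 - l))) = f at *
  induction n with
  | zero =>
    intro x hx
    have hA := (hP x).mul (hF 1 x hx)
    have hB := (hF 0 x hx).congr_of_eventuallyEq
      (Filter.eventuallyEq_of_mem (isOpen_Ioo.mem_nhds hx) h0)
    have := hA.unique hB
    norm_num at this ⊢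
    linarith
  | succ n ih =>
    intro x hx
    have hA := (((hP x).mul (hF (n+2) x hx)).add
      (((hQ x).const_mul ((n:ℝ)+1)).mul (hF (n+1) x hx))).sub
      ((hF n x hx).const_mul (((n:ℝ)+1)*n))
    have hB := (hF (n+1) x hx).congr_of_eventuallyEq
      (Filter.eventuallyEq_of_mem (isOpen_Ioo.mem_nhds hx) ih)
    have := hA.unique hB
    push_cast
    simp only [add_assoc] at this ⊢
    norm_num at this ⊢
    linarith

/-- Lemma 1: recursion for the derivatives a_j of λ ↦ √(λ/(2-λ)) at λ = 1. -/
theorem stmt_2 (a : ℕ → ℝ)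
    (ha : ∀ j, a j = iteratedDeriv j (fun l : ℝ => Real.sqrt (l / (2 - l))) 1) :
    a 0 = 1 ∧ ∀ j, 1 ≤ j →
      (Even j → a j = ((j : ℝ) - 1) * a (j - 1)) ∧
      (Odd j → a j = (j : ℝ) * a (j - 1)) := by
  have h00 : a 0 = 1 := by rw [ha]; norm_num
  have h1 : a 1 = a 0 := by
    have := aux_zero 1 (by norm_num)
    rw [← ha, ← ha] at this
    linarith
  have hr : ∀ n : ℕ, a (n+2) = a (n+1) + ((n:ℝ)+1) * n * a n := by
    intro n
    have := aux_rec n 1 (by norm_num)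
    rw [← ha, ← ha, ← ha] at this
    linarith
  refine ⟨h00, fun j hj => ?_⟩
  induction j, hj using Nat.le_induction with
  | base => simp [h1]
  | succ n hn ih =>
    obtain ⟨m, rfl⟩ : ∃ m, n = m + 1 := ⟨n - 1, by omega⟩
    have hm := hr m
    simp only [Nat.add_sub_cancel] at ih ⊢
    push_cast at ih ⊢
    constructor
    · intro he
      have := ih.2 (by grind)
      rw [hm]
      linear_combination (m:ℝ) * -this
    · intro he
      have := ih.1 (by grind)
      rw [hm]
      linear_combination ((m:ℝ)+1) * -this
end

section
/- Let g : ℝ → ℝ be infinitely differentiable (C^∞) and let h(λ) = 2λ − λ². Then for every integer j ≥ 0: the (2j+1)-st derivative of the composite λ ↦ g(h(λ)) at λ = 1 equals 0, and the (2j)-th derivative of λ ↦ g(h(λ)) at λ = 1 equals (−1)^j · (2j)!/j! · g^{(j)}(1), where g^{(j)} denotes the j-th derivative of g. -/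
lemma aux_mul (f : ℝ → ℝ) (hf : ContDiff ℝ (⊤ : ℕ∞) f) (n : ℕ) :
    iteratedDeriv (n + 1) (fun l : ℝ => (2 - 2 * l) * f l) =
      fun x => (2 - 2 * x) * iteratedDeriv (n + 1) f x
        - 2 * ((n : ℝ) + 1) * iteratedDeriv n f x := by
  have hd : ∀ (m : ℕ) (x : ℝ),
      HasDerivAt (iteratedDeriv m f) (iteratedDeriv (m + 1) f x) x := by
    intro m x
    rw [iteratedDeriv_succ]
    exact ((hf.differentiable_iteratedDeriv m
      (by exact_mod_cast WithTop.coe_lt_top m)) x).hasDerivAt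
  have hl : ∀ x : ℝ, HasDerivAt (fun l : ℝ => 2 - 2 * l) (-2) x := by
    intro x
    simpa using ((hasDerivAt_id x).const_mul (2 : ℝ)).const_sub 2
  induction n with
  | zero =>
    funext x
    rw [iteratedDeriv_succ, iteratedDeriv_zero]
    have h0 := hd 0 x
    rw [iteratedDeriv_zero] at h0
    rw [((hl x).fun_mul h0).deriv]
    simp only [iteratedDeriv_zero]
    push_cast
    ring
  | succ n ih =>
    funext x
    rw [iteratedDeriv_succ, ih]
    rw [(((hl x).fun_mul (hd (n + 1) x)).fun_sub
      ((hd n x).const_mul (2 * ((n : ℝ) + 1)))).deriv]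
    push_cast
    ring

lemma aux_deriv (g : ℝ → ℝ) (hg : ContDiff ℝ (⊤ : ℕ∞) g) :
    deriv (fun l : ℝ => g (2 * l - l ^ 2)) =
      fun l => (2 - 2 * l) * deriv g (2 * l - l ^ 2) := by
  funext x
  have h1 : HasDerivAt (fun l : ℝ => 2 * l - l ^ 2) (2 - 2 * x) x := by
    simpa using ((hasDerivAt_id x).const_mul (2 : ℝ)).fun_sub (hasDerivAt_pow 2 x)
  have h2 : HasDerivAt g (deriv g (2 * x - x ^ 2)) (2 * x - x ^ 2) :=
    ((hg.differentiable (by simp)) _).hasDerivAt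
  have h3 := (HasDerivAt.comp x h2 h1).deriv
  rw [mul_comm, ← h3]
  rfl

lemma aux_rec_s4 (g : ℝ → ℝ) (hg : ContDiff ℝ (⊤ : ℕ∞) g) (n : ℕ) :
    iteratedDeriv (n + 2) (fun l : ℝ => g (2 * l - l ^ 2)) 1 =
      -2 * ((n : ℝ) + 1) * iteratedDeriv n (fun l : ℝ => deriv g (2 * l - l ^ 2)) 1 := by
  have hg' : ContDiff ℝ (⊤ : ℕ∞) (deriv g) := (contDiff_infty_iff_deriv.1 hg).2
  rw [iteratedDeriv_succ', aux_deriv g hg,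
    aux_mul (fun l => deriv g (2 * l - l ^ 2)) (hg'.comp (by fun_prop))]
  ring

/-- Faà di Bruno computation for h(λ) = 2λ - λ² at λ = 1: odd derivatives of
g ∘ h vanish and even derivatives are (-1)^j (2j)!/j! g^{(j)}(1). -/
theorem stmt_4 (g : ℝ → ℝ) (hg : ContDiff ℝ (⊤ : ℕ∞) g) (j : ℕ) :
    iteratedDeriv (2 * j + 1) (fun l : ℝ => g (2 * l - l ^ 2)) 1 = 0 ∧
    iteratedDeriv (2 * j) (fun l : ℝ => g (2 * l - l ^ 2)) 1
      = (-1) ^ j * (((2 * j).factorial : ℝ) / (j.factorial : ℝ)) *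
          iteratedDeriv j g 1 := by
  induction j generalizing g with
  | zero =>
    constructor
    · rw [iteratedDeriv_succ', aux_deriv g hg]
      simp
    · norm_num
  | succ j ih =>
    have hg' : ContDiff ℝ (⊤ : ℕ∞) (deriv g) := (contDiff_infty_iff_deriv.1 hg).2
    obtain ⟨h1, h2⟩ := ih (deriv g) hg'
    constructor
    · rw [show 2 * (j + 1) + 1 = (2 * j + 1) + 2 by ring, aux_rec_s4 g hg, h1, mul_zero]
    · rw [show 2 * (j + 1) = 2 * j + 2 by ring, aux_rec_s4 g hg, h2, iteratedDeriv_succ',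
        Nat.factorial_succ (2 * j + 1), Nat.factorial_succ (2 * j), Nat.factorial_succ j]
      have : (j.factorial : ℝ) ≠ 0 := by exact_mod_cast j.factorial_ne_zero
      have : (j : ℝ) + 1 ≠ 0 := by positivity
      push_cast
      field_simp
      ring
end

section
/- Let g : ℝ → ℝ be infinitely differentiable (C^∞) and define F(λ) = √(λ/(2−λ)) · g(2λ − λ²) for λ ∈ (0,2). Then for every integer n ≥ 0, the (2n+1)-st derivative of F at λ = 1 equals (2n+1) times the (2n)-th derivative of F at λ = 1. -/
lemma aux_mul_s5 (G : ℝ → ℝ) (m : ℕ) (hG : ContDiffAt ℝ (m+1 : ℕ) G 1) :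
    iteratedDeriv (m+1) (fun l : ℝ => l * G l) 1
      = iteratedDeriv (m+1) G 1 + (m+1) * iteratedDeriv m G 1 := by
  rw [iteratedDeriv_fun_mul (f := fun l : ℝ => l) contDiffAt_id hG, Finset.sum_range_succ', Finset.sum_range_succ']
  rw [Finset.sum_eq_zero]
  · simp [iteratedDeriv_succ, add_comm]
  · intro i _
    simp [iteratedDeriv_fun_id]

lemma aux_odd (G : ℝ → ℝ) (hs : ∀ x, G (2 - x) = G x) (n : ℕ) :
    iteratedDeriv (2*n+1) G 1 = 0 := by
  have h := congrFun (iteratedDeriv_comp_const_sub (2*n+1) G 2) 1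
  have h2 : (fun z => G (2 - z)) = G := funext hs
  rw [h2] at h
  norm_num [pow_succ, pow_mul] at h
  linarith

/-- For F(λ) = √(λ/(2-λ))·g(2λ-λ²), F^{(2n+1)}(1) = (2n+1)·F^{(2n)}(1). -/
theorem stmt_5 (g : ℝ → ℝ) (hg : ContDiff ℝ (⊤ : ℕ∞) g) (n : ℕ) :
    iteratedDeriv (2 * n + 1)
        (fun l : ℝ => Real.sqrt (l / (2 - l)) * g (2 * l - l ^ 2)) 1
      = (2 * (n : ℝ) + 1) *
        iteratedDeriv (2 * n)
          (fun l : ℝ => Real.sqrt (l / (2 - l)) * g (2 * l - l ^ 2)) 1 := by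
  set G : ℝ → ℝ := fun l => g (2 * l - l ^ 2) / Real.sqrt (2 * l - l ^ 2) with hGdef
  have hG : ∀ m : ℕ, ContDiffAt ℝ m G 1 := by
    intro m
    have hg' : ContDiff ℝ m g := hg.of_le (by exact_mod_cast le_top)
    have hp : ContDiffAt ℝ m (fun l : ℝ => 2 * l - l ^ 2) 1 := by fun_prop
    refine ContDiffAt.div ?_ (hp.sqrt (by norm_num)) (by norm_num)
    exact hg'.contDiffAt.comp (1 : ℝ) hp
  have hs : ∀ x, G (2 - x) = G x := by
    intro x
    simp only [hGdef]
    rw [show 2 * (2 - x) - (2 - x) ^ 2 = 2 * x - x ^ 2 by ring]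
  have he : (fun l : ℝ => Real.sqrt (l / (2 - l)) * g (2 * l - l ^ 2)) =ᶠ[nhds 1]
      fun l => l * G l := by
    filter_upwards [Ioo_mem_nhds (show (0:ℝ) < 1 by norm_num) (show (1:ℝ) < 2 by norm_num)]
      with l hl
    have h1 : 0 < l := hl.1
    have h2 : 0 < 2 - l := by linarith [hl.2]
    have h3 : Real.sqrt (l / (2 - l)) = l / Real.sqrt (2 * l - l ^ 2) := by
      rw [show l / (2 - l) = l ^ 2 / (2 * l - l ^ 2) by
        rw [show 2 * l - l ^ 2 = l * (2 - l) by ring]; field_simp]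
      rw [Real.sqrt_div (by positivity), Real.sqrt_sq h1.le]
    simp only [hGdef, h3]
    ring
  rw [he.iteratedDeriv_eq, he.iteratedDeriv_eq, aux_mul_s5 G _ (hG _), aux_odd G hs]
  rcases n with _ | k
  · simp
  · rw [show 2 * (k + 1) = 2 * k + 1 + 1 by ring, aux_mul_s5 G _ (hG _), aux_odd G hs]
    push_cast
    ring
end

section
/- Let g, h : ℝ → ℝ be infinitely differentiable (C^∞), define f(λ) = 1 − √(λ/(2−λ)) · g(2λ − λ²) for λ ∈ (0,2), and set d(λ) = h(2λ − λ²) · f(λ). Then for every integer n ≥ 0: −(1/(2n+1)!) · d^{(2n+1)}(1) + (1/(2n)!) · d^{(2n)}(1) = ((−1)^n / n!) · h^{(n)}(1), where d^{(k)}(1) denotes the k-th derivative of d at λ = 1 and h^{(n)} the n-th derivative of h. -/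
theorem aux_mul_id (K : ℝ → ℝ) (m : ℕ) (hK : ContDiffAt ℝ (⊤ : ℕ∞) K 0) :
    iteratedDeriv (m + 1) (fun t => t * K t) 0 = (m + 1) * iteratedDeriv m K 0 := by
  have h1 : ContDiffAt ℝ ((m + 1 : ℕ) : WithTop ℕ∞) (fun t : ℝ => t) 0 := contDiffAt_id
  have h2 : ContDiffAt ℝ ((m + 1 : ℕ) : WithTop ℕ∞) K 0 :=
    hK.of_le (by exact_mod_cast le_top)
  have := iteratedDeriv_fun_mul h1 h2
  rw [this, Finset.sum_eq_single 1]
  · simp [iteratedDeriv_one]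
  · intro b _ hb
    rcases b with _ | _ | b
    · simp
    · exact absurd rfl hb
    · have : iteratedDeriv (b + 1 + 1) (fun t : ℝ => t) = fun _ => 0 := by
        rw [iteratedDeriv_succ']
        funext x
        simp [iteratedDeriv_const]
      simp [this]
  · simp

theorem aux_odd_s7 (K : ℝ → ℝ) (n : ℕ) (hK : ∀ t, K (-t) = K t) :
    iteratedDeriv (2 * n + 1) K 0 = 0 := by
  have := iteratedDeriv_comp_neg (2 * n + 1) K 0
  simp only [hK] at this
  simp [pow_succ, pow_mul] at this
  have h2 : iteratedDeriv (2 * n + 1) (fun x => K x) 0 = iteratedDeriv (2 * n + 1) K 0 := rfl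
  linarith

theorem aux_even (n : ℕ) : ∀ (h : ℝ → ℝ), ContDiff ℝ (⊤ : ℕ∞) h →
    iteratedDeriv (2 * n) (fun t => h (1 - t ^ 2)) 0 =
      ((-1) ^ n * ((2 * n).factorial : ℝ) / (n.factorial : ℝ)) * iteratedDeriv n h 1 := by
  induction n with
  | zero => intro h _; simp
  | succ n ih =>
    intro h hh
    have hd : ContDiff ℝ (⊤ : ℕ∞) (deriv h) := by
      have := (contDiff_infty_iff_deriv (𝕜 := ℝ) (f := h)).1 hh
      exact this.2
    have e : deriv (fun t => h (1 - t ^ 2)) = fun t => t * (-2 * deriv h (1 - t ^ 2)) := by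
      funext t
      have h1 : HasDerivAt (fun t : ℝ => 1 - t ^ 2) (-(2 * t)) t := by
        simpa using (hasDerivAt_pow 2 t).const_sub 1
      have h2 : HasDerivAt h (deriv h (1 - t ^ 2)) (1 - t ^ 2) :=
        (hh.differentiable (by simp) _).hasDerivAt
      have := (h2.comp t h1).deriv
      simp only [Function.comp_def] at this
      rw [this]; ring
    have hs : ContDiff ℝ (⊤ : ℕ∞) (fun t : ℝ => deriv h (1 - t ^ 2)) :=
      hd.comp (by fun_prop)
    rw [show 2 * (n + 1) = (2 * n + 1) + 1 by ring, iteratedDeriv_succ', e,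
      aux_mul_id _ _ (contDiff_const.mul hs).contDiffAt, iteratedDeriv_const_mul_field, ih _ hd,
      iteratedDeriv_succ', Nat.factorial_succ (2 * n + 1), Nat.factorial_succ (2 * n),
      Nat.factorial_succ n]
    have := Nat.factorial_ne_zero n
    push_cast
    field_simp
    ring

/-- Lemma 4: for d(λ) = h(2λ-λ²)·(1 - √(λ/(2-λ))·g(2λ-λ²)),
-d^{(2n+1)}(1)/(2n+1)! + d^{(2n)}(1)/(2n)! = (-1)^n h^{(n)}(1)/n!. -/
theorem stmt_7 (g h : ℝ → ℝ) (hg : ContDiff ℝ (⊤ : ℕ∞) g) (hh : ContDiff ℝ (⊤ : ℕ∞) h) (n : ℕ) :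
    -(1 / ((2 * n + 1).factorial : ℝ)) *
        iteratedDeriv (2 * n + 1)
          (fun l : ℝ =>
            h (2 * l - l ^ 2) *
              (1 - Real.sqrt (l / (2 - l)) * g (2 * l - l ^ 2))) 1
      + (1 / ((2 * n).factorial : ℝ)) *
        iteratedDeriv (2 * n)
          (fun l : ℝ =>
            h (2 * l - l ^ 2) *
              (1 - Real.sqrt (l / (2 - l)) * g (2 * l - l ^ 2))) 1
      = ((-1) ^ n / (n.factorial : ℝ)) * iteratedDeriv n h 1 := by
  set d : ℝ → ℝ := fun l : ℝ =>
            h (2 * l - l ^ 2) *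
              (1 - Real.sqrt (l / (2 - l)) * g (2 * l - l ^ 2)) with hd
  set K : ℝ → ℝ := fun t => h (1 - t ^ 2) * g (1 - t ^ 2) / Real.sqrt (1 - t ^ 2) with hKd
  set H : ℝ → ℝ := fun t => h (1 - t ^ 2) with hHd
  have hHc : ContDiff ℝ (⊤ : ℕ∞) H := hh.comp (by fun_prop)
  have hGc : ContDiff ℝ (⊤ : ℕ∞) (fun t : ℝ => g (1 - t ^ 2)) := hg.comp (by fun_prop)
  have hKc : ContDiffAt ℝ (⊤ : ℕ∞) K 0 := by
    refine ContDiffAt.div (hHc.mul hGc).contDiffAt (ContDiffAt.sqrt ?_ (by norm_num)) (by norm_num)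
    exact ContDiff.contDiffAt (by fun_prop)
  have htK : ContDiffAt ℝ (⊤ : ℕ∞) (fun t => t * K t) 0 := contDiffAt_id.mul hKc
  have hev : (fun t => d (1 + t)) =ᶠ[nhds 0] fun t => (H t - K t) - t * K t := by
    have : Set.Ioo (-1 : ℝ) 1 ∈ nhds (0 : ℝ) := Ioo_mem_nhds (by norm_num) (by norm_num)
    filter_upwards [this] with t ht
    obtain ⟨h1, h2⟩ := ht
    have p : 0 < 1 - t ^ 2 := by nlinarith
    have es : Real.sqrt ((1 + t) / (2 - (1 + t))) = (1 + t) / Real.sqrt (1 - t ^ 2) := by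
      rw [show (1 + t) / (2 - (1 + t)) = (1 + t) ^ 2 / (1 - t ^ 2) by
        have : 2 - (1 + t) ≠ 0 := by intro h; linarith
        field_simp
        ring, Real.sqrt_div (sq_nonneg _), Real.sqrt_sq (by linarith)]
    simp only [hd, hKd, hHd, es, show 2 * (1 + t) - (1 + t) ^ 2 = 1 - t ^ 2 by ring]
    ring
  have key : ∀ k, iteratedDeriv k d 1 =
      iteratedDeriv k H 0 - iteratedDeriv k K 0 - iteratedDeriv k (fun t => t * K t) 0 := by
    intro k
    have hle : ((k : ℕ) : WithTop ℕ∞) ≤ ((⊤ : ℕ∞) : WithTop ℕ∞) := by exact_mod_cast le_top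
    have e1 := congrFun (iteratedDeriv_comp_const_add k d 1) 0
    have e2 := hev.iteratedDeriv_eq k
    simp only [add_zero] at e1
    rw [← e1, e2, iteratedDeriv_fun_sub, iteratedDeriv_fun_sub]
    · exact hHc.contDiffAt.of_le hle
    · exact hKc.of_le hle
    · exact (hHc.contDiffAt.sub hKc).of_le hle
    · exact htK.of_le hle
  have hKe : ∀ t, K (-t) = K t := by intro t; simp [hKd]
  have hHe : ∀ t, H (-t) = H t := by intro t; simp [hHd]
  have hz : iteratedDeriv (2 * n) (fun t => t * K t) 0 = 0 := by
    rcases n with _ | n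
    · simp
    · rw [show 2 * (n + 1) = (2 * n + 1) + 1 by ring, aux_mul_id K _ hKc, aux_odd_s7 K n hKe, mul_zero]
  rw [key, key, aux_odd_s7 K n hKe, aux_odd_s7 H n hHe, hz, aux_mul_id K _ hKc, aux_even n h hh,
    Nat.factorial_succ]
  have := Nat.factorial_ne_zero n
  have := Nat.factorial_ne_zero (2 * n)
  push_cast
  field_simp
  ring
end

section
/- For every λ ∈ (0,2) and every μ ∈ ℝ, with λ̃ := 2λ − λ², the following identity holds: (λ − 1 − cosh μ + √λ̃ · sinh μ)/(λ − 2) = cosh²(μ/2) · (1 − √(λ/(2−λ)) · tanh(μ/2))². -/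
/-- Lemma 3 (algebraic form): for λ ∈ (0,2), λ̃ = 2λ - λ² and any μ,
(λ - 1 - cosh μ + √λ̃ sinh μ)/(λ - 2) = cosh²(μ/2)·(1 - √(λ/(2-λ)) tanh(μ/2))². -/
theorem stmt_8 (l : ℝ) (hl : l ∈ Set.Ioo (0 : ℝ) 2) (μ : ℝ) :
    (l - 1 - Real.cosh μ + Real.sqrt (2 * l - l ^ 2) * Real.sinh μ) / (l - 2)
      = Real.cosh (μ / 2) ^ 2 *
        (1 - Real.sqrt (l / (2 - l)) * Real.tanh (μ / 2)) ^ 2 := by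
  obtain ⟨h0, h2⟩ := hl
  have hb2 : 0 < 2 - l := by linarith
  obtain ⟨x, rfl⟩ : ∃ x, μ = 2 * x := ⟨μ / 2, by ring⟩
  have e1 : 2 * l - l ^ 2 = l * (2 - l) := by ring
  have e2 : 2 * x / 2 = x := by ring
  rw [e1, e2, Real.sqrt_mul h0.le, Real.sqrt_div h0.le, Real.tanh_eq_sinh_div_cosh,
    Real.cosh_two_mul, Real.sinh_two_mul]
  have ha := Real.sq_sqrt h0.le
  have hb := Real.sq_sqrt hb2.le
  have hbp := Real.sqrt_pos.2 hb2
  have hC := Real.cosh_pos x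
  have hCS := Real.cosh_sq x
  generalize √l = a at *
  generalize √(2 - l) = b at *
  generalize Real.cosh x = C at *
  generalize Real.sinh x = S at *
  have e3 : C ^ 2 * (1 - a / b * (S / C)) ^ 2 = (b * C - a * S) ^ 2 / b ^ 2 := by
    field_simp
  have e4 : l - 2 = -b ^ 2 := by linarith
  rw [e3, e4, div_neg, ← neg_div]
  congr 1
  linear_combination (1 - l) * (-hCS) - C ^ 2 * hb - S ^ 2 * ha
end
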